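/- arXiv:2111.11963 — 2 statements merged into one kernel-verified Lean document; each statement's English description precedes it below -/
import Mathlib

section
/- Let α ∈ (0,1) and ε > 0 be such that (1+ε)·α < 1. Then (1/α)·H((1+ε)α; α) ≤ ε²·( 1 + 1/ε + (1−(1+ε)α)/((1−α)·ε) ), where H(λ; α) = λ·ln(λ/α) + (1−λ)·ln((1−λ)/(1−α)). -/
/-! The bound `log t ≤ t - 1` on both logarithms dominates the Kullback–Leibler divergence by the
`χ²`-divergence. From Bernoulli(`(1 + ε) α`) to Bernoulli(`α`), the latter divided by `α` equals
`ε² (1 + 1/ε - (1 - (1 + ε) α) / ((1 - α) ε))`, and the subtracted term is nonnegative. -/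

/-- The Kullback–Leibler divergence `H(p; q)` of Bernoulli(`p`) from Bernoulli(`q`), in nats, for
`p ∈ [0, 1]` and `q ∈ (0, 1)`; the convention `0 log 0 = 0` is the value `Real.log 0 = 0`. -/
noncomputable def bernoulliKL (p q : ℝ) : ℝ :=
  p * Real.log (p / q) + (1 - p) * Real.log ((1 - p) / (1 - q))

-- The linear term `x - y` is kept separate because it cancels when summed over distributions.
lemma mul_log_div_le_sq_div_add_sub {x y : ℝ} (hx : 0 ≤ x) (hy : 0 < y) :
    x * Real.log (x / y) ≤ (x - y) ^ 2 / y + (x - y) := by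
  rcases hx.eq_or_lt with rfl | hx
  · apply le_of_eq
    field_simp
    ring
  · calc x * Real.log (x / y)
        ≤ x * (x / y - 1) := by gcongr; exact Real.log_le_sub_one_of_pos (div_pos hx hy)
      _ = (x - y) ^ 2 / y + (x - y) := by field_simp; ring

lemma bernoulliKL_le_chiSq {p q : ℝ} (hp₀ : 0 ≤ p) (hp₁ : p ≤ 1) (hq₀ : 0 < q) (hq₁ : q < 1) :
    bernoulliKL p q ≤ (p - q) ^ 2 / (q * (1 - q)) := by
  have hq : 0 < 1 - q := sub_pos.2 hq₁
  calc bernoulliKL p q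
      ≤ ((p - q) ^ 2 / q + (p - q))
          + (((1 - p) - (1 - q)) ^ 2 / (1 - q) + ((1 - p) - (1 - q))) :=
        add_le_add (mul_log_div_le_sq_div_add_sub hp₀ hq₀)
          (mul_log_div_le_sq_div_add_sub (sub_nonneg.2 hp₁) hq)
    _ = (p - q) ^ 2 / (q * (1 - q)) := by field_simp; ring

/-- Key estimate for tightness of the Chernoff-type bounds:
(1/α)·H((1+ε)α; α) ≤ ε²·(1 + 1/ε + (1−(1+ε)α)/((1−α)·ε)), where H(λ; α) is the
Kullback–Leibler divergence between Bernoulli(λ) and Bernoulli(α). -/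
theorem kl_divergence_estimate
    (α ε : ℝ) (hα0 : 0 < α) (hα1 : α < 1) (hε : 0 < ε)
    (h : (1 + ε) * α < 1) :
    (1 / α) * ((1 + ε) * α * Real.log ((1 + ε) * α / α)
        + (1 - (1 + ε) * α) * Real.log ((1 - (1 + ε) * α) / (1 - α)))
      ≤ ε ^ 2 * (1 + 1 / ε + (1 - (1 + ε) * α) / ((1 - α) * ε)) := by
  have hα : 0 < 1 - α := sub_pos.2 hα1
  have hterm : 0 ≤ (1 - (1 + ε) * α) / ((1 - α) * ε) :=
    div_nonneg (sub_nonneg.2 h.le) (by positivity)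
  calc (1 / α) * bernoulliKL ((1 + ε) * α) α
      ≤ (1 / α) * (((1 + ε) * α - α) ^ 2 / (α * (1 - α))) := by
        gcongr
        exact bernoulliKL_le_chiSq (by positivity) h.le hα0 hα1
    _ = ε ^ 2 * (1 + 1 / ε - (1 - (1 + ε) * α) / ((1 - α) * ε)) := by field_simp; ring
    _ ≤ ε ^ 2 * (1 + 1 / ε + (1 - (1 + ε) * α) / ((1 - α) * ε)) := by gcongr; linarith
end

section
/- Let m ∈ ℕ, α ∈ (0,1) and ε ∈ (0,1) be such that λ := (1+ε)·α satisfies 1/2 ≤ λ < 1 and λ·m ∈ ℕ, and set μ = α·m. Then the probability that a Binomial(m, α) random variable X satisfies X ≥ (1+ε)·μ is at least (1/√(2m))·exp(−μ·ε²·( 1 + 1/ε + (1−(1+ε)α)/((1−α)·ε) )). Consequently, the exponential rate exp(−b²/x) (up to a multiplicative constant in the exponent, with b = εμ and x = μ) in the definition of approximately staying within university quota cannot be improved: any unbiased lottery solution staying within department quota that treats departments independently has, on the instance where each of m departments has exactly one vacancy and category j has reservation fraction α, university-level allocation to j distributed as Binomial(m, α), whose upper tail obeys the above lower bound. -/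
open Finset

/-!
The tail is bounded below by its first term. Since `λm` is an integer, `Binomial(m, λ)` attains its
mean with probability at least `1 / √(2m)`: the Stirling sequence is log-convex, so
`s_l s_k / s_{l+k}` is largest at `l = k = 1`, where it equals `2`. Replacing the parameter `λ` by
`α` costs a factor `exp (-m * D)`, where `D` is the relative entropy of `Bernoulli(λ)` with respect
to `Bernoulli(α)`, and `D` is at most the chi-squared divergence `(λ - α)² / (α (1 - α))`.
-/

section Stirling

open Stirling

theorem factorial_eq_stirlingSeq_mul {n : ℕ} (hn : n ≠ 0) :
    (n.factorial : ℝ) = stirlingSeq n * (√(2 * n) * (n / Real.exp 1) ^ n) := by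
  rw [stirlingSeq, div_mul_cancel₀ _ (by positivity)]

theorem stirlingSeq_pos {n : ℕ} (hn : n ≠ 0) : 0 < stirlingSeq n := by
  obtain ⟨n, rfl⟩ := Nat.exists_eq_succ_of_ne_zero hn
  exact stirlingSeq'_pos n

theorem stirlingSeq_two : stirlingSeq 2 = Real.exp 1 ^ 2 / 4 := by
  have hsqrt : √(2 * (2 : ℕ)) = 2 := by
    rw [Real.sqrt_eq_iff_mul_self_eq] <;> norm_num
  rw [stirlingSeq, hsqrt, Nat.factorial_two]
  push_cast
  field_simp
  norm_num

theorem stirlingSeq_one_mul_self : stirlingSeq 1 * stirlingSeq 1 = 2 * stirlingSeq 2 := by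
  rw [stirlingSeq_two, stirlingSeq_one, div_mul_div_comm, Real.mul_self_sqrt (by norm_num)]
  ring

theorem antitone_log_stirlingSeq_sub :
    Antitone fun n : ℕ => Real.log (stirlingSeq (n + 1)) - Real.log (stirlingSeq (n + 2)) := by
  intro a b hab
  refine hasSum_le (fun j => ?_) (log_stirlingSeq_sdiff_hasSum b) (log_stirlingSeq_sdiff_hasSum a)
  gcongr

theorem stirlingSeq_mul_le_of_le {a b : ℕ} (hab : a ≤ b) (d : ℕ) :
    stirlingSeq (a + d + 1) * stirlingSeq (b + 1) ≤
      stirlingSeq (a + 1) * stirlingSeq (b + d + 1) := by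
  have hlog : Real.log (stirlingSeq (b + 1)) - Real.log (stirlingSeq (b + d + 1)) ≤
      Real.log (stirlingSeq (a + 1)) - Real.log (stirlingSeq (a + d + 1)) := by
    induction d with
    | zero => simp only [add_zero, sub_self, le_refl]
    | succ d ih =>
      have hstep := antitone_log_stirlingSeq_sub (Nat.add_le_add_right hab d)
      simp only [← add_assoc] at hstep ⊢
      linarith
  have hpos := stirlingSeq'_pos
  rw [← Real.log_le_log_iff (mul_pos (hpos _) (hpos _)) (mul_pos (hpos _) (hpos _)),
    Real.log_mul (hpos _).ne' (hpos _).ne', Real.log_mul (hpos _).ne' (hpos _).ne']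
  linarith

theorem stirlingSeq_mul_le_two_mul {l k : ℕ} (hl : l ≠ 0) (hk : k ≠ 0) :
    stirlingSeq l * stirlingSeq k ≤ 2 * stirlingSeq (l + k) := by
  obtain ⟨l, rfl⟩ := Nat.exists_eq_add_one_of_ne_zero hl
  obtain ⟨k, rfl⟩ := Nat.exists_eq_add_one_of_ne_zero hk
  have hspread : stirlingSeq (l + 1) * stirlingSeq (k + 1) ≤
      stirlingSeq 1 * stirlingSeq (l + k + 1) := by
    simpa only [zero_add, add_comm k l] using stirlingSeq_mul_le_of_le (Nat.zero_le k) l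
  have hshift : stirlingSeq (l + k + 1) * stirlingSeq 2 ≤
      stirlingSeq 1 * stirlingSeq (l + k + 2) := by
    simpa only [zero_add, one_add_one_eq_two, add_right_comm 1 (l + k) 1, add_comm 2 (l + k)]
      using stirlingSeq_mul_le_of_le zero_le_one (l + k)
  rw [show l + 1 + (k + 1) = l + k + 2 by ring]
  refine le_of_mul_le_mul_right ?_ (stirlingSeq_pos two_ne_zero)
  calc stirlingSeq (l + 1) * stirlingSeq (k + 1) * stirlingSeq 2
      ≤ stirlingSeq 1 * stirlingSeq (l + k + 1) * stirlingSeq 2 :=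
        mul_le_mul_of_nonneg_right hspread (stirlingSeq_pos two_ne_zero).le
    _ ≤ stirlingSeq 1 * (stirlingSeq 1 * stirlingSeq (l + k + 2)) := by
        rw [mul_assoc]
        exact mul_le_mul_of_nonneg_left hshift (stirlingSeq_pos one_ne_zero).le
    _ = 2 * stirlingSeq (l + k + 2) * stirlingSeq 2 := by
        rw [← mul_assoc, stirlingSeq_one_mul_self, mul_right_comm]

theorem choose_mul_pow_eq_stirlingSeq {l k : ℕ} (hl : l ≠ 0) (hk : k ≠ 0) :
    ((l + k).choose l : ℝ) * (l / (l + k)) ^ l * (k / (l + k)) ^ k =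
      stirlingSeq (l + k) / (stirlingSeq l * stirlingSeq k) * √((l + k) / (2 * (l * k))) := by
  have hsl := stirlingSeq_pos hl
  have hsk := stirlingSeq_pos hk
  have hsqrt : √((l + k : ℝ) / (2 * (l * k))) = √(2 * (l + k)) / (√(2 * l) * √(2 * k)) := by
    rw [← Real.sqrt_mul (by positivity), ← Real.sqrt_div (by positivity)]
    congr 1
    field_simp
  rw [hsqrt, Nat.cast_add_choose, factorial_eq_stirlingSeq_mul hl,
    factorial_eq_stirlingSeq_mul hk, factorial_eq_stirlingSeq_mul (by lia : l + k ≠ 0)]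
  push_cast
  simp only [div_pow, pow_add]
  field_simp

end Stirling

theorem one_div_sqrt_le_choose_mul_pow {l k : ℕ} (hl : l ≠ 0) (hk : k ≠ 0) :
    1 / √(2 * (l + k)) ≤ ((l + k).choose l : ℝ) * (l / (l + k)) ^ l * (k / (l + k)) ^ k := by
  have hsl := stirlingSeq_pos hl
  have hsk := stirlingSeq_pos hk
  have hratio : 1 / 2 ≤ Stirling.stirlingSeq (l + k) /
      (Stirling.stirlingSeq l * Stirling.stirlingSeq k) := by
    rw [div_le_div_iff₀ two_pos (mul_pos hsl hsk)]
    linarith [stirlingSeq_mul_le_two_mul hl hk]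
  have hamgm : 2 / (l + k : ℝ) ≤ (l + k) / (2 * (l * k)) := by
    rw [div_le_div_iff₀ (by positivity) (by positivity)]
    nlinarith [four_mul_le_sq_add (l : ℝ) k]
  calc 1 / √(2 * (l + k))
      = 1 / 2 * √(2 / (l + k)) := by
        rw [Real.sqrt_div two_pos.le, Real.sqrt_mul two_pos.le]
        field_simp
        rw [Real.sq_sqrt two_pos.le]
    _ ≤ Stirling.stirlingSeq (l + k) / (Stirling.stirlingSeq l * Stirling.stirlingSeq k) *
          √((l + k) / (2 * (l * k))) := by gcongr
    _ = _ := (choose_mul_pow_eq_stirlingSeq hl hk).symm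

theorem le_of_cast_eq_mul {n l : ℕ} {p : ℝ} (hp : p ≤ 1) (hl : (l : ℝ) = p * n) : l ≤ n := by
  exact_mod_cast hl.le.trans (mul_le_of_le_one_left n.cast_nonneg hp)

theorem one_div_sqrt_le_binomial_mean {n l : ℕ} {p : ℝ} (hp : p ≤ 1) (hl : (l : ℝ) = p * n) :
    1 / √(2 * n) ≤ (n.choose l : ℝ) * p ^ l * (1 - p) ^ (n - l) := by
  obtain ⟨k, rfl⟩ := Nat.exists_eq_add_of_le (le_of_cast_eq_mul hp hl)
  rcases eq_or_ne (l + k) 0 with hn | hn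
  · obtain ⟨rfl, rfl⟩ := Nat.add_eq_zero_iff.mp hn
    simp
  have hn_pos : (0 : ℝ) < (l + k : ℕ) := by positivity
  have hp_eq : p = l / (l + k : ℕ) := eq_div_of_mul_eq hn_pos.ne' hl.symm
  have hq_eq : 1 - p = k / (l + k : ℕ) := by
    rw [hp_eq]
    field_simp
    push_cast
    ring
  have hle_one : 1 / √(2 * (l + k : ℕ)) ≤ 1 := by
    have hone_le : (1 : ℝ) ≤ (l + k : ℕ) := by exact_mod_cast Nat.one_le_iff_ne_zero.mpr hn
    exact div_le_one_of_le₀ (Real.one_le_sqrt.mpr (by linarith)) (Real.sqrt_nonneg _)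
  rw [hq_eq, hp_eq, Nat.add_sub_cancel_left]
  rcases eq_or_ne l 0 with rfl | hl0
  · simpa [show k ≠ 0 by lia] using hle_one
  rcases eq_or_ne k 0 with rfl | hk0
  · simpa [hl0] using hle_one
  simpa only [Nat.cast_add] using one_div_sqrt_le_choose_mul_pow hl0 hk0

theorem pow_le_pow_mul_exp {x y : ℝ} (hx : 0 ≤ x) (hy : 0 < y) (n : ℕ) :
    x ^ n ≤ y ^ n * Real.exp (n * (x / y - 1)) := by
  rw [Real.exp_nat_mul, ← mul_pow]
  refine pow_le_pow_left₀ hx ?_ n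
  rw [← div_le_iff₀' hy]
  linarith [Real.add_one_le_exp (x / y - 1)]

theorem pow_mul_pow_le_mul_exp_chiSq {l k : ℕ} {p α : ℝ} (hp₀ : 0 ≤ p) (hp₁ : p ≤ 1)
    (hα₀ : 0 < α) (hα₁ : α < 1) (hl : (l : ℝ) = p * (l + k)) :
    p ^ l * (1 - p) ^ k ≤
      α ^ l * (1 - α) ^ k * Real.exp ((l + k) * (p - α) ^ 2 / (α * (1 - α))) := by
  have hβ : 0 < 1 - α := sub_pos.mpr hα₁
  have hk : (k : ℝ) = (1 - p) * (l + k) := by linarith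
  have hexponent : (l + k) * (p - α) ^ 2 / (α * (1 - α)) =
      l * (p / α - 1) + k * ((1 - p) / (1 - α) - 1) := by
    generalize (l + k : ℝ) = n at hl hk ⊢
    rw [hl, hk]
    field_simp
    ring
  calc p ^ l * (1 - p) ^ k
      ≤ (α ^ l * Real.exp (l * (p / α - 1))) *
          ((1 - α) ^ k * Real.exp (k * ((1 - p) / (1 - α) - 1))) :=
        mul_le_mul (pow_le_pow_mul_exp hp₀ hα₀ l) (pow_le_pow_mul_exp (sub_nonneg.mpr hp₁) hβ k)
          (pow_nonneg (sub_nonneg.mpr hp₁) k) (by positivity)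
    _ = _ := by
        rw [hexponent, Real.exp_add]
        ring

theorem one_div_sqrt_mul_exp_neg_chiSq_le_binomial {n l : ℕ} {p α : ℝ} (hp₀ : 0 ≤ p)
    (hp₁ : p ≤ 1) (hα₀ : 0 < α) (hα₁ : α < 1) (hl : (l : ℝ) = p * n) :
    1 / √(2 * n) * Real.exp (-(n * (p - α) ^ 2 / (α * (1 - α)))) ≤
      (n.choose l : ℝ) * α ^ l * (1 - α) ^ (n - l) := by
  have hln : l ≤ n := le_of_cast_eq_mul hp₁ hl
  have hn : (l : ℝ) + (n - l : ℕ) = n := by exact_mod_cast Nat.add_sub_of_le hln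
  have hchange := pow_mul_pow_le_mul_exp_chiSq (k := n - l) hp₀ hp₁ hα₀ hα₁ (by rwa [hn])
  rw [hn] at hchange
  rw [Real.exp_neg, ← div_eq_mul_inv, div_le_iff₀ (Real.exp_pos _)]
  calc 1 / √(2 * n)
      ≤ n.choose l * p ^ l * (1 - p) ^ (n - l) := one_div_sqrt_le_binomial_mean hp₁ hl
    _ = n.choose l * (p ^ l * (1 - p) ^ (n - l)) := mul_assoc _ _ _
    _ ≤ n.choose l * (α ^ l * (1 - α) ^ (n - l) *
          Real.exp (n * (p - α) ^ 2 / (α * (1 - α)))) := by gcongr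
    _ = _ := by ring

theorem binomial_term_le_tail {n l : ℕ} {α : ℝ} (hα₀ : 0 ≤ α) (hα₁ : α ≤ 1) (hln : l ≤ n) :
    (n.choose l : ℝ) * α ^ l * (1 - α) ^ (n - l) ≤
      ∑ c ∈ Icc l n, (n.choose c : ℝ) * α ^ c * (1 - α) ^ (n - c) :=
  single_le_sum (f := fun c => (n.choose c : ℝ) * α ^ c * (1 - α) ^ (n - c))
    (fun c _ => mul_nonneg (by positivity) (pow_nonneg (sub_nonneg.mpr hα₁) _))
    (left_mem_Icc.mpr hln)

theorem chiSq_le_of_relative_deviation {α ε : ℝ} (hα₀ : 0 < α) (hα₁ : α < 1) (hε : 0 < ε)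
    (hle : (1 + ε) * α ≤ 1) :
    ((1 + ε) * α - α) ^ 2 / (α * (1 - α)) ≤
      α * ε ^ 2 * (1 + 1 / ε + (1 - (1 + ε) * α) / ((1 - α) * ε)) := by
  have hβ : 0 < 1 - α := sub_pos.mpr hα₁
  have hgap : 0 ≤ 2 * α * ε * (1 - (1 + ε) * α) / (1 - α) :=
    div_nonneg (mul_nonneg (by positivity) (sub_nonneg.mpr hle)) hβ.le
  rw [← sub_nonneg]
  convert hgap using 1
  field_simp
  ring

theorem binomial_tail_tightness_general
    (m : ℕ) (α ε : ℝ) (hα0 : 0 < α) (hε0 : 0 < ε) (hle1 : (1 + ε) * α ≤ 1)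
    (l : ℕ) (hl : (l : ℝ) = (1 + ε) * α * m) :
    (1 / Real.sqrt (2 * m)) *
        Real.exp (-(α * m) * ε ^ 2 *
          (1 + 1 / ε + (1 - (1 + ε) * α) / ((1 - α) * ε)))
      ≤ ∑ c ∈ Finset.Icc l m, (m.choose c : ℝ) * α ^ c * (1 - α) ^ (m - c) := by
  have hα1 : α < 1 := by nlinarith
  have hlm : l ≤ m := le_of_cast_eq_mul hle1 hl
  have hexponent := mul_le_mul_of_nonneg_left
    (chiSq_le_of_relative_deviation hα0 hα1 hε0 hle1) m.cast_nonneg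
  calc _ ≤ 1 / √(2 * m) * Real.exp (-(m * ((1 + ε) * α - α) ^ 2 / (α * (1 - α)))) := by
        gcongr
        rw [mul_div_assoc]
        linarith
    _ ≤ m.choose l * α ^ l * (1 - α) ^ (m - l) :=
        one_div_sqrt_mul_exp_neg_chiSq_le_binomial (by positivity) hle1 hα0 hα1 hl
    _ ≤ _ := binomial_term_le_tail hα0.le hα1.le hlm

/-- Tightness of the approximate university-quota bounds: with
λ = (1+ε)·α satisfying 1/2 ≤ λ < 1 and λ·m ∈ ℕ, and μ = α·m, the probability
that a Binomial(m, α) random variable is at least (1+ε)·μ — i.e. the binomial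
upper tail ∑_{c = λm}^{m} C(m,c)·α^c·(1−α)^{m−c} — is at least
(1/√(2m))·exp(−μ·ε²·(1 + 1/ε + (1−(1+ε)α)/((1−α)·ε))). Hence the exponential
rate exp(−b²/x) (up to a multiplicative constant in the exponent, with b = εμ,
x = μ) cannot be improved for unbiased lotteries staying within department quota
with independent departments, since with one vacancy per department the
university-level allocation is Binomial(m, α). -/
theorem binomial_tail_tightness
    (m : ℕ) (α ε : ℝ) (hα0 : 0 < α) (hα1 : α < 1)
    (hε0 : 0 < ε) (hε1 : ε < 1)
    (hhalf : 1 / 2 ≤ (1 + ε) * α) (hlt1 : (1 + ε) * α < 1)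
    (l : ℕ) (hl : (l : ℝ) = (1 + ε) * α * m) :
    (1 / Real.sqrt (2 * m)) *
        Real.exp (-(α * m) * ε ^ 2 *
          (1 + 1 / ε + (1 - (1 + ε) * α) / ((1 - α) * ε)))
      ≤ ∑ c ∈ Finset.Icc l m, (m.choose c : ℝ) * α ^ c * (1 - α) ^ (m - c) :=
  binomial_tail_tightness_general m α ε hα0 hε0 hlt1.le l hl
end
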